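/- arXiv:2109.12647 — 2 statements merged into one kernel-verified Lean document; each statement's English description precedes it below -/
import Mathlib

section
/- Let M, S_1,…,S_n, Y_1,…,Y_n be jointly distributed random variables with finite ranges such that for each i ∈ {1,…,n}, S_i is independent of the pair (M, S_{i+1}^n). Define X_i = (M, Y^{i−1}, S_{i+1}^n). Then I(M ; Y^n) ≤ Σ_{i=1}^n [ I(X_i ; Y_i) − I(X_i ; S_i) ], where Y^n = (Y_1,…,Y_n), Y^{i−1} = (Y_1,…,Y_{i−1}), S_{i+1}^n = (S_{i+1},…,S_n), and Y^0 and S_{n+1}^n are interpreted as constants. -/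
open Finset

/-- The Shannon entropy `H(q) = −Σ_{a : q(a)>0} q(a) log₂ q(a)` of a pmf on a finite set. -/
noncomputable def shannonEnt {α : Type} [Fintype α] (q : α → ℝ) : ℝ :=
  -∑ a, if 0 < q a then q a * Real.logb 2 (q a) else 0

/-- The distribution (pushforward pmf) of a random variable `X` on a finite probability
space with pmf `μ`. -/
def rvDist {Ω α : Type} [Fintype Ω] [DecidableEq α] (μ : Ω → ℝ) (X : Ω → α) : α → ℝ :=
  fun a => ∑ ω, if X ω = a then μ ω else 0

/-- The Shannon entropy `H(X)` of a finite-valued random variable `X`. -/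
noncomputable def Hrv {Ω α : Type} [Fintype Ω] [Fintype α] [DecidableEq α]
    (μ : Ω → ℝ) (X : Ω → α) : ℝ :=
  shannonEnt (rvDist μ X)

/-- The mutual information `I(X;Y) = H(X) + H(Y) − H(X,Y)`. -/
noncomputable def MIrv {Ω α β : Type} [Fintype Ω] [Fintype α] [Fintype β]
    [DecidableEq α] [DecidableEq β] (μ : Ω → ℝ) (X : Ω → α) (Y : Ω → β) : ℝ :=
  Hrv μ X + Hrv μ Y - Hrv μ (fun ω => (X ω, Y ω))

/-- `X` and `Y` are independent: their joint distribution factorizes. -/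
def IndepRV {Ω α β : Type} [Fintype Ω] [DecidableEq α] [DecidableEq β]
    (μ : Ω → ℝ) (X : Ω → α) (Y : Ω → β) : Prop :=
  ∀ a b, rvDist μ (fun ω => (X ω, Y ω)) (a, b) = rvDist μ X a * rvDist μ Y b

/-!
Moving the indices one by one from `S` to `Y`, the mutual information `I(M, S_{Tᶜ} ; Y_T)` goes from
`0` at `T = ∅` to `I(M ; Y^n)` at `T = {1, …, n}`. With `W = (M, S_{i+1}^n)` and `V = Y^{i-1}`, the
chain rule computes the `i`-th increment as
`I(W ; V, Y_i) − I(W, S_i ; V) = I(W, V ; Y_i) − I(V ; Y_i) − I(W, V ; S_i) + I(W ; S_i)`,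
where `I(V ; Y_i) ≥ 0`, and `I(W ; S_i) = 0` by independence. Telescoping along `T` takes the place
of the Csiszár sum identity.
-/

section Gibbs

variable {κ : Type*} [Fintype κ]

lemma sub_le_mul_log_div {x y : ℝ} (hx : 0 ≤ x) (hy : 0 ≤ y) (hxy : y = 0 → x = 0) :
    x - y ≤ x * Real.log (x / y) := by
  rcases hy.eq_or_lt with rfl | hy
  · simp [hxy rfl]
  · have hkl := mul_nonneg hy.le (InformationTheory.klFun_nonneg (div_nonneg hx hy.le))
    rw [InformationTheory.klFun_apply] at hkl
    field_simp at hkl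
    linarith

lemma sum_mul_logb_div_nonneg {b : ℝ} (hb : 1 < b) {p q : κ → ℝ} (hp : ∀ a, 0 ≤ p a)
    (hq : ∀ a, 0 ≤ q a) (hpq : ∀ a, q a = 0 → p a = 0) (hsum : ∑ a, q a ≤ ∑ a, p a) :
    0 ≤ ∑ a, p a * Real.logb b (p a / q a) := by
  have hlog : 0 ≤ ∑ a, p a * Real.log (p a / q a) :=
    calc 0 ≤ ∑ a, (p a - q a) := by rwa [sum_sub_distrib, sub_nonneg]
      _ ≤ ∑ a, p a * Real.log (p a / q a) :=
        sum_le_sum fun a _ => sub_le_mul_log_div (hp a) (hq a) (hpq a)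
  simp only [Real.logb, ← mul_div_assoc, ← sum_div]
  exact div_nonneg hlog (Real.log_pos hb).le

end Gibbs

section Distribution

variable {Ω α β : Type} [Fintype Ω] [DecidableEq α] [DecidableEq β] {μ : Ω → ℝ}

lemma rvDist_nonneg (hμ0 : ∀ ω, 0 ≤ μ ω) (X : Ω → α) (a : α) : 0 ≤ rvDist μ X a :=
  sum_nonneg fun ω _ => ite_nonneg (hμ0 ω) le_rfl

lemma rvDist_apply_pos (hμ0 : ∀ ω, 0 ≤ μ ω) (X : Ω → α) {ω : Ω} (hω : 0 < μ ω) :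
    0 < rvDist μ X (X ω) :=
  sum_pos' (fun ω' _ => ite_nonneg (hμ0 ω') le_rfl) ⟨ω, mem_univ ω, by rwa [if_pos rfl]⟩

lemma rvDist_le_rvDist_comp (hμ0 : ∀ ω, 0 ≤ μ ω) (X : Ω → α) (f : α → β) (a : α) :
    rvDist μ X a ≤ rvDist μ (fun ω => f (X ω)) (f a) := by
  refine sum_le_sum fun ω _ => ?_
  by_cases h : X ω = a
  · simp [h]
  · rw [if_neg h]
    exact ite_nonneg (hμ0 ω) le_rfl

variable [Fintype α]

lemma sum_rvDist_mul (μ : Ω → ℝ) (X : Ω → α) (f : α → ℝ) :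
    ∑ a, rvDist μ X a * f a = ∑ ω, μ ω * f (X ω) := by
  simp only [rvDist, sum_mul]
  rw [sum_comm]
  simp only [ite_mul, zero_mul, sum_ite_eq, mem_univ, if_true]

lemma sum_rvDist (μ : Ω → ℝ) (X : Ω → α) : ∑ a, rvDist μ X a = ∑ ω, μ ω := by
  simpa only [mul_one] using sum_rvDist_mul μ X fun _ => 1

end Distribution

section Entropy

variable {Ω α β : Type} [Fintype Ω] [Fintype α] [Fintype β] [DecidableEq α] [DecidableEq β]
  {μ : Ω → ℝ}

lemma Hrv_eq_neg_sum_mul_logb (hμ0 : ∀ ω, 0 ≤ μ ω) (X : Ω → α) :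
    Hrv μ X = -∑ ω, μ ω * Real.logb 2 (rvDist μ X (X ω)) := by
  rw [Hrv, shannonEnt, ← sum_rvDist_mul μ X fun a => Real.logb 2 (rvDist μ X a)]
  congr 1
  refine sum_congr rfl fun a _ => ite_eq_left_iff.mpr fun h => ?_
  rw [le_antisymm (not_lt.mp h) (rvDist_nonneg hμ0 X a), zero_mul]

lemma Hrv_congr (hμ0 : ∀ ω, 0 ≤ μ ω) {X : Ω → α} {Y : Ω → β}
    (h : ∀ ω ω', X ω = X ω' ↔ Y ω = Y ω') : Hrv μ X = Hrv μ Y := by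
  simp only [Hrv_eq_neg_sum_mul_logb hμ0, rvDist, h]

end Entropy

section MutualInformation

variable {Ω α β γ δ : Type} [Fintype Ω] [Fintype α] [Fintype β] [Fintype γ] [Fintype δ]
  [DecidableEq α] [DecidableEq β] [DecidableEq γ] [DecidableEq δ] {μ : Ω → ℝ}

lemma MIrv_congr (hμ0 : ∀ ω, 0 ≤ μ ω) {X : Ω → α} {X' : Ω → β} {Y : Ω → γ} {Y' : Ω → δ}
    (hX : ∀ ω ω', X ω = X ω' ↔ X' ω = X' ω') (hY : ∀ ω ω', Y ω = Y ω' ↔ Y' ω = Y' ω') :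
    MIrv μ X Y = MIrv μ X' Y' := by
  have hXY : Hrv μ (fun ω => (X ω, Y ω)) = Hrv μ (fun ω => (X' ω, Y' ω)) :=
    Hrv_congr hμ0 fun ω ω' => by rw [Prod.mk.injEq, Prod.mk.injEq, hX, hY]
  rw [MIrv, MIrv, Hrv_congr hμ0 hX, Hrv_congr hμ0 hY, hXY]

lemma MIrv_comm (hμ0 : ∀ ω, 0 ≤ μ ω) (X : Ω → α) (Y : Ω → β) : MIrv μ X Y = MIrv μ Y X := by
  have hswap : Hrv μ (fun ω => (X ω, Y ω)) = Hrv μ (fun ω => (Y ω, X ω)) :=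
    Hrv_congr hμ0 fun ω ω' => by simp only [Prod.mk.injEq, and_comm]
  rw [MIrv, MIrv, hswap, add_comm (Hrv μ X)]

lemma MIrv_prodMk_prodMk_swap (hμ0 : ∀ ω, 0 ≤ μ ω) (X : Ω → α) (Y : Ω → β) (Z : Ω → γ)
    (T : Ω → δ) :
    MIrv μ (fun ω => ((X ω, Y ω), Z ω)) T = MIrv μ (fun ω => (X ω, Z ω, Y ω)) T :=
  MIrv_congr hμ0 (fun ω ω' => by simp only [Prod.mk.injEq, and_assoc, and_comm])
    fun _ _ => Iff.rfl

lemma MIrv_eq_sum_mul_logb (hμ0 : ∀ ω, 0 ≤ μ ω) (X : Ω → α) (Y : Ω → β) :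
    MIrv μ X Y = ∑ p : α × β, rvDist μ (fun ω => (X ω, Y ω)) p *
      Real.logb 2 (rvDist μ (fun ω => (X ω, Y ω)) p / (rvDist μ X p.1 * rvDist μ Y p.2)) := by
  rw [sum_rvDist_mul μ (fun ω => (X ω, Y ω)) fun p => Real.logb 2
      (rvDist μ (fun ω => (X ω, Y ω)) p / (rvDist μ X p.1 * rvDist μ Y p.2)),
    MIrv, Hrv_eq_neg_sum_mul_logb hμ0, Hrv_eq_neg_sum_mul_logb hμ0, Hrv_eq_neg_sum_mul_logb hμ0,
    ← neg_add, ← sum_add_distrib, sub_neg_eq_add, neg_add_eq_sub, ← sum_sub_distrib]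
  refine sum_congr rfl fun ω _ => ?_
  rcases (hμ0 ω).eq_or_lt with hω | hω
  · simp only [← hω, zero_mul, add_zero, sub_zero]
  · have hX := (rvDist_apply_pos hμ0 X hω).ne'
    have hY := (rvDist_apply_pos hμ0 Y hω).ne'
    have hXY := (rvDist_apply_pos hμ0 (fun ω => (X ω, Y ω)) hω).ne'
    rw [Real.logb_div hXY (mul_ne_zero hX hY), Real.logb_mul hX hY]
    ring

lemma MIrv_nonneg (hμ0 : ∀ ω, 0 ≤ μ ω) (hμ1 : ∑ ω, μ ω = 1) (X : Ω → α) (Y : Ω → β) :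
    0 ≤ MIrv μ X Y := by
  rw [MIrv_eq_sum_mul_logb hμ0]
  refine sum_mul_logb_div_nonneg one_lt_two (rvDist_nonneg hμ0 _)
    (fun p => mul_nonneg (rvDist_nonneg hμ0 X p.1) (rvDist_nonneg hμ0 Y p.2)) (fun p hp => ?_) ?_
  · refine le_antisymm ?_ (rvDist_nonneg hμ0 _ p)
    rcases mul_eq_zero.mp hp with hX | hY
    · exact (rvDist_le_rvDist_comp hμ0 _ Prod.fst p).trans_eq hX
    · exact (rvDist_le_rvDist_comp hμ0 _ Prod.snd p).trans_eq hY
  · rw [Fintype.sum_prod_type, ← Fintype.sum_mul_sum, sum_rvDist, sum_rvDist, sum_rvDist, hμ1,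
      mul_one]

lemma IndepRV.MIrv_eq_zero (hμ0 : ∀ ω, 0 ≤ μ ω) {X : Ω → α} {Y : Ω → β} (h : IndepRV μ X Y) :
    MIrv μ X Y = 0 := by
  rw [MIrv_eq_sum_mul_logb hμ0]
  refine sum_eq_zero fun p _ => ?_
  rw [h p.1 p.2]
  rcases eq_or_ne (rvDist μ X p.1 * rvDist μ Y p.2) 0 with hp | hp
  · rw [hp, zero_mul]
  · rw [div_self hp, Real.logb_one, mul_zero]

lemma MIrv_eq_zero_of_subsingleton [Subsingleton β] (hμ0 : ∀ ω, 0 ≤ μ ω) (hμ1 : ∑ ω, μ ω = 1)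
    (X : Ω → α) (Y : Ω → β) : MIrv μ X Y = 0 := by
  refine IndepRV.MIrv_eq_zero hμ0 fun a b => ?_
  simp [rvDist, Subsingleton.elim _ b, hμ1]

lemma MIrv_prodMk_right (hμ0 : ∀ ω, 0 ≤ μ ω) (X : Ω → α) (Y : Ω → β) (Z : Ω → γ) :
    MIrv μ X (fun ω => (Y ω, Z ω)) =
      MIrv μ X Y + MIrv μ (fun ω => (X ω, Y ω)) Z - MIrv μ Y Z := by
  have hassoc : Hrv μ (fun ω => (X ω, Y ω, Z ω)) = Hrv μ (fun ω => ((X ω, Y ω), Z ω)) :=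
    Hrv_congr hμ0 fun ω ω' => by simp only [Prod.mk.injEq, and_assoc]
  simp only [MIrv, hassoc]
  ring

lemma MIrv_prodMk_left (hμ0 : ∀ ω, 0 ≤ μ ω) (X : Ω → α) (Y : Ω → β) (Z : Ω → γ) :
    MIrv μ (fun ω => (X ω, Y ω)) Z =
      MIrv μ X Z + MIrv μ (fun ω => (X ω, Z ω)) Y - MIrv μ X Y := by
  have hswap : MIrv μ (fun ω => (Z ω, X ω)) Y = MIrv μ (fun ω => (X ω, Z ω)) Y :=
    MIrv_congr hμ0 (fun ω ω' => by simp only [Prod.mk.injEq, and_comm]) fun _ _ => Iff.rfl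
  rw [MIrv_comm hμ0, MIrv_prodMk_right hμ0, hswap, MIrv_comm hμ0 Z X]

lemma IndepRV.MIrv_prodMk_sub_MIrv_prodMk_le (hμ0 : ∀ ω, 0 ≤ μ ω) (hμ1 : ∑ ω, μ ω = 1)
    {S : Ω → α} {W : Ω → β} (h : IndepRV μ S W) (V : Ω → γ) (Y : Ω → δ) :
    MIrv μ W (fun ω => (V ω, Y ω)) - MIrv μ (fun ω => (W ω, S ω)) V ≤
      MIrv μ (fun ω => (W ω, V ω)) Y - MIrv μ (fun ω => (W ω, V ω)) S := by
  have hWS : MIrv μ W S = 0 := (MIrv_comm hμ0 W S).trans (h.MIrv_eq_zero hμ0)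
  rw [MIrv_prodMk_right hμ0 W V Y, MIrv_prodMk_left hμ0 W S V, hWS]
  linarith [MIrv_nonneg hμ0 hμ1 V Y]

end MutualInformation

section Telescoping

variable {ι G : Type*} [LinearOrder ι] [AddCommGroup G]

lemma sum_filter_le_sub_filter_lt (F : Finset ι → G) (s : Finset ι) :
    ∑ i ∈ s, (F {j ∈ s | j ≤ i} - F {j ∈ s | j < i}) = F s - F ∅ := by
  induction s using Finset.induction_on_max with
  | empty => simp
  | insert a s hmax ih =>
    have ha : a ∉ s := fun h => (hmax a h).false
    have hle : {j ∈ insert a s | j ≤ a} = insert a s :=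
      filter_true_of_mem <| (forall_mem_insert ..).mpr ⟨le_rfl, fun j hj => (hmax j hj).le⟩
    have hlt : {j ∈ insert a s | j < a} = s := by
      rw [filter_insert, if_neg (lt_irrefl a), filter_true_of_mem hmax]
    have hbelow : ∀ i ∈ s, F {j ∈ insert a s | j ≤ i} - F {j ∈ insert a s | j < i} =
        F {j ∈ s | j ≤ i} - F {j ∈ s | j < i} := fun i hi => by
      rw [filter_insert, filter_insert, if_neg (hmax i hi).not_ge, if_neg (hmax i hi).not_gt]
    rw [sum_insert ha, sum_congr rfl hbelow, ih, hle, hlt, sub_add_sub_cancel]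

end Telescoping

section Hybrid

variable {Ω α ι : Type} [Fintype Ω] [Fintype α] [DecidableEq α] [Fintype ι]
  {β γ : ι → Type} [∀ i, Fintype (β i)] [∀ i, DecidableEq (β i)]
  [∀ i, Fintype (γ i)] [∀ i, DecidableEq (γ i)] {μ : Ω → ℝ}

/-- The mutual information `I(M, S_{Tᶜ} ; Y_T)`, which interpolates between `0` and `I(M ; Y)` as
the set `T` of indices at which `Y` is observed grows. -/
noncomputable def hybridMI [DecidableEq ι] (μ : Ω → ℝ) (M : Ω → α) (S : ∀ i, Ω → β i)
    (Y : ∀ i, Ω → γ i) (T : Finset ι) : ℝ :=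
  MIrv μ (fun ω => (M ω, fun j : {j // j ∉ T} => S j ω)) (fun ω => fun j : {j // j ∈ T} => Y j ω)

lemma hybridMI_empty [DecidableEq ι] (hμ0 : ∀ ω, 0 ≤ μ ω) (hμ1 : ∑ ω, μ ω = 1) (M : Ω → α)
    (S : ∀ i, Ω → β i) (Y : ∀ i, Ω → γ i) : hybridMI μ M S Y ∅ = 0 :=
  MIrv_eq_zero_of_subsingleton hμ0 hμ1 _ _

lemma hybridMI_univ [DecidableEq ι] (hμ0 : ∀ ω, 0 ≤ μ ω) (M : Ω → α) (S : ∀ i, Ω → β i)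
    (Y : ∀ i, Ω → γ i) : hybridMI μ M S Y univ = MIrv μ M (fun ω => fun i => Y i ω) :=
  MIrv_congr hμ0 (fun ω ω' => by simp [funext_iff]) fun ω ω' => by simp [funext_iff]

variable [LinearOrder ι]

lemma hybridMI_filter_le (hμ0 : ∀ ω, 0 ≤ μ ω) (M : Ω → α) (S : ∀ i, Ω → β i)
    (Y : ∀ i, Ω → γ i) (i : ι) :
    hybridMI μ M S Y {j | j ≤ i} =
      MIrv μ (fun ω => (M ω, fun j : {j // i < j} => S j ω))
        (fun ω => (fun j : {j // j < i} => Y j ω, Y i ω)) :=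
  MIrv_congr hμ0 (fun ω ω' => by simp [funext_iff]) fun ω ω' => by
    simp [funext_iff, le_iff_lt_or_eq, or_imp, forall_and]

lemma hybridMI_filter_lt (hμ0 : ∀ ω, 0 ≤ μ ω) (M : Ω → α) (S : ∀ i, Ω → β i)
    (Y : ∀ i, Ω → γ i) (i : ι) :
    hybridMI μ M S Y {j | j < i} =
      MIrv μ (fun ω => ((M ω, fun j : {j // i < j} => S j ω), S i ω))
        (fun ω => fun j : {j // j < i} => Y j ω) :=
  MIrv_congr hμ0
    (fun ω ω' => by simp [funext_iff, le_iff_lt_or_eq, or_imp, forall_and, and_assoc])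
    fun ω ω' => by simp [funext_iff]

theorem multiletter_to_single_letter_bound_general (hμ0 : ∀ ω, 0 ≤ μ ω) (hμ1 : ∑ ω, μ ω = 1)
    (M : Ω → α) (S : ∀ i, Ω → β i) (Y : ∀ i, Ω → γ i)
    (hindep : ∀ i, IndepRV μ (S i) (fun ω => (M ω, fun j : {j // i < j} => S j ω))) :
    MIrv μ M (fun ω => fun i => Y i ω) ≤
      ∑ i, (MIrv μ (fun ω => (M ω, (fun j : {j // j < i} => Y j ω),
              (fun j : {j // i < j} => S j ω))) (Y i) -
            MIrv μ (fun ω => (M ω, (fun j : {j // j < i} => Y j ω),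
              (fun j : {j // i < j} => S j ω))) (S i)) := by
  calc MIrv μ M (fun ω => fun i => Y i ω)
      = hybridMI μ M S Y univ - hybridMI μ M S Y ∅ := by
        rw [hybridMI_univ hμ0, hybridMI_empty hμ0 hμ1, sub_zero]
    _ = ∑ i, (hybridMI μ M S Y {j | j ≤ i} - hybridMI μ M S Y {j | j < i}) :=
        (sum_filter_le_sub_filter_lt (hybridMI μ M S Y) univ).symm
    _ ≤ _ := sum_le_sum fun i _ => by
        rw [hybridMI_filter_le hμ0, hybridMI_filter_lt hμ0, ← MIrv_prodMk_prodMk_swap hμ0,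
          ← MIrv_prodMk_prodMk_swap hμ0]
        exact (hindep i).MIrv_prodMk_sub_MIrv_prodMk_le hμ0 hμ1 _ _

end Hybrid

/-- **Multi-letter to single-letter bound.** If for each `i` the variable `S_i` is
independent of the pair `(M, S_{i+1}^n)`, then with `X_i = (M, Y^{i−1}, S_{i+1}^n)`,
`I(M ; Y^n) ≤ Σ_{i=1}^n [ I(X_i ; Y_i) − I(X_i ; S_i) ]`. -/
theorem multiletter_to_single_letter_bound
    {Ω α β γ : Type} [Fintype Ω] [Fintype α] [Fintype β] [Fintype γ]
    [DecidableEq α] [DecidableEq β] [DecidableEq γ]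
    (μ : Ω → ℝ) (hμ0 : ∀ ω, 0 ≤ μ ω) (hμ1 : ∑ ω, μ ω = 1)
    (n : ℕ) (M : Ω → α) (S : Fin n → Ω → β) (Y : Fin n → Ω → γ)
    (hindep : ∀ i : Fin n, IndepRV μ (S i)
      (fun ω => (M ω, fun j : {j : Fin n // i < j} => S j ω))) :
    MIrv μ M (fun ω => fun i : Fin n => Y i ω)
      ≤ ∑ i : Fin n,
          (MIrv μ
              (fun ω => (M ω, (fun j : {j : Fin n // j < i} => Y j ω),
                (fun j : {j : Fin n // i < j} => S j ω)))
              (Y i)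
           - MIrv μ
              (fun ω => (M ω, (fun j : {j : Fin n // j < i} => Y j ω),
                (fun j : {j : Fin n // i < j} => S j ω)))
              (S i)) := by
  exact multiletter_to_single_letter_bound_general hμ0 hμ1 M S Y hindep
end

section
/- Let 𝒳 and 𝒴 be finite sets and let p and q be pmfs on 𝒳×𝒴 whose total variation distance satisfies (1/2)·Σ_{(x,y)} |p(x,y) − q(x,y)| ≤ ε with 0 ≤ ε ≤ 1. Then |H(X|Y)_p − H(X|Y)_q| ≤ 2ε·log₂|𝒳| + (1+ε)·h(ε/(1+ε)), where H(X|Y)_p = H(p) − H(p_Y) is the conditional Shannon entropy under p (and likewise H(X|Y)_q under q), and p_Y, q_Y denote the 𝒴-marginals of p and q. -/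
open Finset

/-- The binary entropy function `h(x) = −x log₂ x − (1−x) log₂ (1−x)`
(with `h(0) = h(1) = 0`, using `logb 2 0 = 0`). -/
noncomputable def binH (x : ℝ) : ℝ :=
  -x * Real.logb 2 x - (1 - x) * Real.logb 2 (1 - x)

/-!
The entropy of a nonnegative weight, made homogeneous of degree one, is by Gibbs' inequality
(`weightEntropy_le_sum_mul_log`) a minimum of linear functionals. Hence it is superadditive, and
being nonnegative it is monotone; so is the conditional entropy `C`, a sum of entropies of slices.

Let `d` be the positive part of `p - q`, whose mass `δ` is the total variation distance. Since
`p ≤ q + d`, monotonicity gives `C p ≤ C (q + d)`. Revealing from which of the two summands an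
outcome was drawn costs at most the entropy of the pair of masses, so
`C (q + d) ≤ C q + C d + (1 + δ) * h (δ / (1 + δ))`, and `C d ≤ δ * log |𝒳|`.
-/

section WeightEntropy

open Real

variable {ι κ A B : Type*} [Fintype ι] [Fintype κ] [Fintype A] [Fintype B]

/-- The entropy in nats of a nonnegative weight `v` that need not be normalised, made homogeneous
of degree one: it equals `V * H(v / V)`, where `V` is the total mass of `v`. -/
noncomputable def weightEntropy (v : ι → ℝ) : ℝ :=
  ∑ i, negMulLog (v i) - negMulLog (∑ i, v i)

lemma weightEntropy_eq_sum_mul_log (v : ι → ℝ) :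
    weightEntropy v = ∑ i, v i * (log (∑ k, v k) - log (v i)) := by
  simp only [weightEntropy, negMulLog, mul_sub, sum_sub_distrib, ← sum_mul, neg_mul,
    sum_neg_distrib]
  ring

lemma weightEntropy_smul (c : ℝ) (v : ι → ℝ) :
    weightEntropy (c • v) = c * weightEntropy v := by
  simp only [weightEntropy, Pi.smul_apply, smul_eq_mul, ← mul_sum, negMulLog_mul,
    sum_add_distrib, ← sum_mul]
  ring

lemma weightEntropy_pair {a b : ℝ} (h : a + b ≠ 0) :
    weightEntropy ![a, b] = (a + b) * binEntropy (b / (a + b)) := by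
  have ha : (a + b) * (1 - b / (a + b)) = a := by
    field_simp
    ring
  have hb : (a + b) * (b / (a + b)) = b := mul_div_cancel₀ b h
  have hsmul : ![a, b] = (a + b) • ![1 - b / (a + b), b / (a + b)] := by
    simp only [Matrix.smul_cons, smul_eq_mul, ha, hb, Matrix.smul_empty]
  rw [hsmul, weightEntropy_smul, binEntropy_eq_negMulLog_add_negMulLog_one_sub]
  simp [weightEntropy, add_comm]

lemma weightEntropy_nonneg {v : ι → ℝ} (hv : ∀ i, 0 ≤ v i) : 0 ≤ weightEntropy v := by
  rw [weightEntropy_eq_sum_mul_log]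
  refine sum_nonneg fun i _ => ?_
  rcases (hv i).eq_or_lt with hi | hi
  · simp [← hi]
  · exact mul_nonneg hi.le <| sub_nonneg.2 <| log_le_log hi <|
      single_le_sum (fun k _ => hv k) (mem_univ i)

lemma negMulLog_le_sub_sub_mul_log {x y : ℝ} (hx : 0 ≤ x) (hy : 0 < y) :
    negMulLog x ≤ y - x - x * log y := by
  have hxy : y * (x / y) = x := mul_div_cancel₀ x hy.ne'
  calc negMulLog x = x / y * negMulLog y + y * negMulLog (x / y) := by rw [← negMulLog_mul, hxy]
    _ ≤ x / y * negMulLog y + y * (1 - x / y) := by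
        gcongr
        exact negMulLog_le_one_sub_self (by positivity)
    _ = y - x - x * log y := by
        rw [negMulLog]
        field_simp
        ring

lemma weightEntropy_le_sum_mul_log {v w : ι → ℝ} (hv : ∀ i, 0 ≤ v i) (hw : ∀ i, 0 ≤ w i)
    (hvw : ∀ i, w i = 0 → v i = 0) :
    weightEntropy v ≤ ∑ i, v i * (log (∑ k, w k) - log (w i)) := by
  rcases (sum_nonneg fun i _ => hv i : 0 ≤ ∑ i, v i).eq_or_lt with hV | hV
  · have hzero : v = 0 := (Fintype.sum_eq_zero_iff_of_nonneg hv).1 hV.symm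
    simp [hzero, weightEntropy]
  have hW : 0 < ∑ i, w i := by
    refine (sum_nonneg fun i _ => hw i).lt_of_ne fun hW => hV.ne' ?_
    have hzero : w = 0 := (Fintype.sum_eq_zero_iff_of_nonneg hw).1 hW.symm
    exact sum_eq_zero fun i _ => hvw i (congrFun hzero i)
  set V := ∑ i, v i with hVdef
  set W := ∑ i, w i with hWdef
  have hterm (i : ι) :
      negMulLog (v i) ≤ V / W * w i - v i + v i * (log W - log (w i)) - v i * log V := by
    rcases (hw i).eq_or_lt with hi | hi
    · simp [← hi, hvw i hi.symm]
    · have h := negMulLog_le_sub_sub_mul_log (hv i) (mul_pos (div_pos hV hW) hi)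
      rw [log_mul (div_pos hV hW).ne' hi.ne', log_div hV.ne' hW.ne'] at h
      linarith
  have hsum := sum_le_sum fun i (_ : i ∈ univ) => hterm i
  rw [sum_sub_distrib, sum_add_distrib, sum_sub_distrib, ← mul_sum, ← sum_mul, ← hVdef, ← hWdef,
    div_mul_cancel₀ V hW.ne'] at hsum
  rw [weightEntropy, ← hVdef, negMulLog]
  linarith

lemma weightEntropy_le_mass_mul_log_card {v : ι → ℝ} (hv : ∀ i, 0 ≤ v i) :
    weightEntropy v ≤ (∑ i, v i) * log (Fintype.card ι) := by
  simpa [← sum_mul] using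
    weightEntropy_le_sum_mul_log (w := fun _ => 1) hv (fun _ => zero_le_one) (by simp)

lemma sum_weightEntropy_le {v : κ → ι → ℝ} (hv : ∀ k i, 0 ≤ v k i) :
    ∑ k, weightEntropy (v k) ≤ weightEntropy (∑ k, v k) := by
  have hsum (i : ι) : 0 ≤ (∑ k, v k) i := by
    rw [Finset.sum_apply]
    exact sum_nonneg fun k _ => hv k i
  have hzero (k : κ) (i : ι) (h : (∑ k, v k) i = 0) : v k i = 0 := by
    rw [Finset.sum_apply] at h
    exact (sum_eq_zero_iff_of_nonneg fun k _ => hv k i).1 h k (mem_univ k)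
  calc ∑ k, weightEntropy (v k)
      ≤ ∑ k, ∑ i, v k i * (log (∑ j, (∑ k, v k) j) - log ((∑ k, v k) i)) :=
        sum_le_sum fun k _ => weightEntropy_le_sum_mul_log (hv k) hsum (hzero k)
    _ = weightEntropy (∑ k, v k) := by
        rw [weightEntropy_eq_sum_mul_log, sum_comm]
        simp only [Finset.sum_apply, ← sum_mul]

lemma weightEntropy_mono {v w : ι → ℝ} (hv : ∀ i, 0 ≤ v i) (hvw : ∀ i, v i ≤ w i) :
    weightEntropy v ≤ weightEntropy w := by
  have hsub (i : ι) : 0 ≤ (w - v) i := sub_nonneg.2 (hvw i)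
  have hsuper : weightEntropy v + weightEntropy (w - v) ≤ weightEntropy w := by
    simpa [Fin.sum_univ_two] using
      sum_weightEntropy_le (v := ![v, w - v]) (Fin.forall_fin_two.2 ⟨hv, hsub⟩)
  linarith [weightEntropy_nonneg hsub]

lemma weightEntropy_add_le {v w : ι → ℝ} (hv : ∀ i, 0 ≤ v i) (hw : ∀ i, 0 ≤ w i) :
    weightEntropy (v + w) ≤
      weightEntropy v + weightEntropy w + weightEntropy ![∑ i, v i, ∑ i, w i] := by
  have hpair : 0 ≤ ∑ i, weightEntropy ![v i, w i] :=
    sum_nonneg fun i _ => weightEntropy_nonneg (Fin.forall_fin_two.2 ⟨hv i, hw i⟩)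
  simp only [weightEntropy, Fin.sum_univ_two, Matrix.cons_val_zero, Matrix.cons_val_one,
    Pi.add_apply, sum_add_distrib, sum_sub_distrib] at hpair ⊢
  linarith

/-- The conditional entropy `H(A|B)`, in nats, of a nonnegative weight `f` on `A × B` that need not
be normalised, written as the sum over `b` of the entropies of the slices `f (·, b)`. -/
noncomputable def condWeightEntropy (f : A × B → ℝ) : ℝ :=
  ∑ b, weightEntropy fun a => f (a, b)

lemma condWeightEntropy_mono {f g : A × B → ℝ} (hf : ∀ x, 0 ≤ f x) (hfg : ∀ x, f x ≤ g x) :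
    condWeightEntropy f ≤ condWeightEntropy g :=
  sum_le_sum fun b _ => weightEntropy_mono (fun a => hf (a, b)) fun a => hfg (a, b)

lemma condWeightEntropy_le_mass_mul_log_card {f : A × B → ℝ} (hf : ∀ x, 0 ≤ f x) :
    condWeightEntropy f ≤ (∑ x, f x) * log (Fintype.card A) := by
  rw [Fintype.sum_prod_type_right, sum_mul]
  exact sum_le_sum fun b _ => weightEntropy_le_mass_mul_log_card fun a => hf (a, b)

lemma condWeightEntropy_add_le {f g : A × B → ℝ} (hf : ∀ x, 0 ≤ f x) (hg : ∀ x, 0 ≤ g x) :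
    condWeightEntropy (f + g) ≤
      condWeightEntropy f + condWeightEntropy g + weightEntropy ![∑ x, f x, ∑ x, g x] := by
  have hmarginal : ∑ b, weightEntropy ![∑ a, f (a, b), ∑ a, g (a, b)] ≤
      weightEntropy ![∑ x, f x, ∑ x, g x] := by
    have hsum : ∑ b, ![∑ a, f (a, b), ∑ a, g (a, b)] = ![∑ x, f x, ∑ x, g x] := by
      ext i
      fin_cases i <;> simp [Fintype.sum_prod_type_right]
    rw [← hsum]
    exact sum_weightEntropy_le fun b => Fin.forall_fin_two.2
      ⟨sum_nonneg fun a _ => hf (a, b), sum_nonneg fun a _ => hg (a, b)⟩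
  calc condWeightEntropy (f + g)
      ≤ ∑ b, (weightEntropy (fun a => f (a, b)) + weightEntropy (fun a => g (a, b)) +
          weightEntropy ![∑ a, f (a, b), ∑ a, g (a, b)]) :=
        sum_le_sum fun b _ => weightEntropy_add_le (fun a => hf (a, b)) fun a => hg (a, b)
    _ ≤ condWeightEntropy f + condWeightEntropy g + weightEntropy ![∑ x, f x, ∑ x, g x] := by
        rw [sum_add_distrib, sum_add_distrib]
        exact add_le_add_right hmarginal _

lemma condWeightEntropy_sub_le {f g : A × B → ℝ} (hf : ∀ x, 0 ≤ f x) (hg : ∀ x, 0 ≤ g x) :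
    condWeightEntropy f - condWeightEntropy g ≤
      (∑ x, (f x - g x)⁺) * log (Fintype.card A) +
        weightEntropy ![∑ x, g x, ∑ x, (f x - g x)⁺] := by
  set d : A × B → ℝ := fun x => (f x - g x)⁺
  have hd (x : A × B) : 0 ≤ d x := posPart_nonneg _
  have hfgd (x : A × B) : f x ≤ (g + d) x := sub_le_iff_le_add'.1 (le_posPart (f x - g x))
  linarith [condWeightEntropy_mono hf hfgd, condWeightEntropy_add_le hg hd,
    condWeightEntropy_le_mass_mul_log_card hd]

lemma sum_posPart_sub_eq_half_sum_abs_sub {f g : ι → ℝ} (hfg : ∑ i, f i = ∑ i, g i) :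
    ∑ i, (f i - g i)⁺ = 1 / 2 * ∑ i, |f i - g i| := by
  have hpos (i : ι) : (f i - g i)⁺ = 1 / 2 * (|f i - g i| + (f i - g i)) := by
    rw [abs_add_eq_two_nsmul_posPart, two_nsmul]
    ring
  simp only [hpos, ← mul_sum, sum_add_distrib, sum_sub_distrib, hfg, sub_self, add_zero]

lemma abs_condWeightEntropy_sub_le {f g : A × B → ℝ} {m ε : ℝ} (hf : ∀ x, 0 ≤ f x)
    (hfm : ∑ x, f x = m) (hg : ∀ x, 0 ≤ g x) (hgm : ∑ x, g x = m)
    (hTV : 1 / 2 * ∑ x, |f x - g x| ≤ ε) :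
    |condWeightEntropy f - condWeightEntropy g| ≤
      ε * log (Fintype.card A) + weightEntropy ![m, ε] := by
  wlog hle : condWeightEntropy g ≤ condWeightEntropy f generalizing f g
  · rw [abs_sub_comm]
    exact this hg hgm hf hfm (by simpa only [abs_sub_comm] using hTV) (le_of_not_ge hle)
  have hδε : ∑ x, (f x - g x)⁺ ≤ ε :=
    (sum_posPart_sub_eq_half_sum_abs_sub (hfm.trans hgm.symm)).trans_le hTV
  have hδ : 0 ≤ ∑ x, (f x - g x)⁺ := sum_nonneg fun x _ => posPart_nonneg _
  have hm : 0 ≤ m := hgm ▸ sum_nonneg fun x _ => hg x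
  rw [abs_of_nonneg (sub_nonneg.2 hle)]
  calc condWeightEntropy f - condWeightEntropy g
      ≤ (∑ x, (f x - g x)⁺) * log (Fintype.card A) +
          weightEntropy ![m, ∑ x, (f x - g x)⁺] := hgm ▸ condWeightEntropy_sub_le hf hg
    _ ≤ ε * log (Fintype.card A) + weightEntropy ![m, ε] :=
        add_le_add (mul_le_mul_of_nonneg_right hδε (log_natCast_nonneg _)) <|
          weightEntropy_mono (Fin.forall_fin_two.2 ⟨hm, hδ⟩) (Fin.forall_fin_two.2 ⟨le_rfl, hδε⟩)

lemma shannonEnt_eq_sum_negMulLog_div {α : Type} [Fintype α] {p : α → ℝ} (hp : ∀ a, 0 ≤ p a) :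
    shannonEnt p = (∑ a, negMulLog (p a)) / log 2 := by
  rw [shannonEnt, sum_div, ← sum_neg_distrib]
  refine sum_congr rfl fun a _ => ?_
  rcases (hp a).eq_or_lt with ha | ha
  · simp [← ha]
  · rw [if_pos ha, negMulLog, logb]
    ring

lemma shannonEnt_sub_shannonEnt_marginal {𝒳 𝒴 : Type} [Fintype 𝒳] [Fintype 𝒴]
    {p : 𝒳 × 𝒴 → ℝ} (hp : ∀ x, 0 ≤ p x) :
    shannonEnt p - shannonEnt (fun b : 𝒴 => ∑ a, p (a, b)) = condWeightEntropy p / log 2 := by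
  rw [shannonEnt_eq_sum_negMulLog_div hp,
    shannonEnt_eq_sum_negMulLog_div fun b => sum_nonneg fun a _ => hp (a, b), ← sub_div,
    Fintype.sum_prod_type_right, ← sum_sub_distrib]
  rfl

lemma binH_eq_binEntropy_div (x : ℝ) : binH x = binEntropy x / log 2 := by
  rw [binH, binEntropy_eq_negMulLog_add_negMulLog_one_sub, negMulLog, negMulLog, logb, logb]
  ring

lemma add_mul_binH_div_add {m ε : ℝ} (hm : 0 ≤ m) (hε : 0 ≤ ε) :
    (m + ε) * binH (ε / (m + ε)) = weightEntropy ![m, ε] / log 2 := by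
  rcases (add_nonneg hm hε).eq_or_lt with h | h
  · obtain ⟨rfl, rfl⟩ := (add_eq_zero_iff_of_nonneg hm hε).1 h.symm
    simp [weightEntropy]
  · rw [weightEntropy_pair h.ne', binH_eq_binEntropy_div, mul_div_assoc]

end WeightEntropy

theorem afw_conditional_entropy_continuity_general
    {𝒳 𝒴 : Type} [Fintype 𝒳] [Fintype 𝒴] {p q : 𝒳 × 𝒴 → ℝ} {m ε : ℝ}
    (hp : ∀ x, 0 ≤ p x) (hpm : ∑ x, p x = m) (hq : ∀ x, 0 ≤ q x) (hqm : ∑ x, q x = m)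
    (hTV : 1 / 2 * ∑ x, |p x - q x| ≤ ε) :
    |(shannonEnt p - shannonEnt (fun b : 𝒴 => ∑ a, p (a, b)))
        - (shannonEnt q - shannonEnt (fun b : 𝒴 => ∑ a, q (a, b)))|
      ≤ ε * Real.logb 2 (Fintype.card 𝒳) + (m + ε) * binH (ε / (m + ε)) := by
  have hlog : 0 < Real.log 2 := Real.log_pos one_lt_two
  have hm : 0 ≤ m := hpm ▸ sum_nonneg fun x _ => hp x
  have hε : 0 ≤ ε := le_trans (by positivity) hTV
  rw [shannonEnt_sub_shannonEnt_marginal hp, shannonEnt_sub_shannonEnt_marginal hq,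
    add_mul_binH_div_add hm hε, Real.logb, ← sub_div, abs_div, abs_of_pos hlog, ← mul_div_assoc,
    ← add_div]
  gcongr
  exact abs_condWeightEntropy_sub_le hp hpm hq hqm hTV

/-- **Alicki–Fannes–Winter continuity bound, classical case.** If `p` and `q` are pmfs
on `𝒳 × 𝒴` with total variation distance `(1/2)·Σ |p − q| ≤ ε ≤ 1`, then the conditional
entropies `H(X|Y) = H(p) − H(p_Y)` satisfy
`|H(X|Y)_p − H(X|Y)_q| ≤ 2ε·log₂|𝒳| + (1+ε)·h(ε/(1+ε))`. -/
theorem afw_conditional_entropy_continuity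
    {𝒳 𝒴 : Type} [Fintype 𝒳] [Fintype 𝒴]
    (p q : 𝒳 × 𝒴 → ℝ)
    (hp0 : ∀ ab, 0 ≤ p ab) (hp1 : ∑ ab, p ab = 1)
    (hq0 : ∀ ab, 0 ≤ q ab) (hq1 : ∑ ab, q ab = 1)
    (ε : ℝ) (hε0 : 0 ≤ ε) (hε1 : ε ≤ 1)
    (hTV : (1 / 2) * ∑ ab, |p ab - q ab| ≤ ε) :
    |(shannonEnt p - shannonEnt (fun b : 𝒴 => ∑ a, p (a, b)))
        - (shannonEnt q - shannonEnt (fun b : 𝒴 => ∑ a, q (a, b)))|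
      ≤ 2 * ε * Real.logb 2 (Fintype.card 𝒳) + (1 + ε) * binH (ε / (1 + ε)) := by
  have hlog : 0 ≤ Real.logb 2 (Fintype.card 𝒳) :=
    div_nonneg (Real.log_natCast_nonneg _) (Real.log_nonneg one_le_two)
  linarith [afw_conditional_entropy_continuity_general hp0 hp1 hq0 hq1 hTV, mul_nonneg hε0 hlog]
end
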